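/- Let 1/3 < λ < 1, ξ ∈ ℝ, b, σ ∈ C_b²(ℝ;ℝ) with inf σ > 0, and for g ∈ C^λ₀([0,1];ℝ) let x_·(ξ,g) be the Doss–Sussmann solution; set W = σb' − σ'b. If h : [0,1] → ℝ is Lipschitz continuous with h(0) = 0, then for every t ∈ [0,1] the directional derivative ∇_h x_t(ξ,g) := lim_{ε→0} (x_t(ξ,g+εh) − x_t(ξ,g))/ε exists and equals σ(x_t(ξ,g))·∫₀^t exp(∫_s^t (W/σ)(x_u(ξ,g)) du)·h'(s) ds, where h' is the almost-everywhere defined derivative of the Lipschitz function h. -/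

import Mathlib

/-- `f` is in `C_b^n(ℝ;ℝ)`. -/
def CbN (n : ℕ) (f : ℝ → ℝ) : Prop :=
  ContDiff ℝ n f ∧ ∀ i ≤ n, ∃ M : ℝ, ∀ x : ℝ, |iteratedDeriv i f x| ≤ M

/-- `f_{σ,b}(x,y) = exp(−∫₀^y σ'(φ(x,η))dη) · b(φ(x,y))`. -/
noncomputable def fsb (b σ : ℝ → ℝ) (φ : ℝ → ℝ → ℝ) (x y : ℝ) : ℝ :=
  Real.exp (-(∫ η in (0:ℝ)..y, deriv σ (φ x η))) * b (φ x y)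

/-- The Wronskian-type function `W = σb' − σ'b`. -/
noncomputable def Wf (b σ : ℝ → ℝ) (x : ℝ) : ℝ := σ x * deriv b x - deriv σ x * b x

/-!
The Lamperti coordinate `G x = ∫₀ˣ 1 / σ` straightens the flow `φ` to a translation, so
`Y = G (φ (a, g))` satisfies the equation with additive noise `Y_t = G ξ + g_t + ∫₀ᵗ F (Y_s) ds`,
where `F ∘ G = b / σ` and `F' ∘ G = W / σ`. The difference of the solutions driven by `g + ε h` and
by `g` solves a linear equation with source `ε h`, whose coefficient is the mean of `F'` between the
two solutions. Variation of constants solves that equation exactly; dividing by `ε` and letting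
`ε → 0` replaces the mean by `F' (Y)`, and the factor `σ` is the derivative of `G⁻¹ = φ (0, ·)`.
-/

open MeasureTheory Set Filter Topology Metric
open scoped Interval

theorem continuousOn_of_dist_le_mul_dist_rpow {X Y : Type*} [PseudoMetricSpace X]
    [PseudoMetricSpace Y] {f : X → Y} {s : Set X} {C r : ℝ} (hr : 0 < r)
    (hf : ∀ x ∈ s, ∀ y ∈ s, dist (f x) (f y) ≤ C * dist x y ^ r) : ContinuousOn f s := by
  intro x hx
  rw [ContinuousWithinAt, tendsto_iff_dist_tendsto_zero]
  have hlim : Tendsto (fun y => C * dist y x ^ r) (𝓝[s] x) (𝓝 0) := by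
    have hcont : Continuous fun y => C * dist y x ^ r :=
      continuous_const.mul ((continuous_id.dist continuous_const).rpow_const fun _ => .inr hr.le)
    simpa [hr.ne'] using (hcont.tendsto x).mono_left nhdsWithin_le_nhds
  exact squeeze_zero' (.of_forall fun _ => dist_nonneg)
    (eventually_mem_nhdsWithin.mono fun y hy => hf y hy x hx) hlim

theorem absolutelyContinuousOnInterval_comp {X Y : Type*} [SeminormedAddCommGroup X]
    [PseudoMetricSpace Y] {f : ℝ → X} {Φ : X → Y} {a b : ℝ} (hΦ : LocallyLipschitz Φ)
    (hf : AbsolutelyContinuousOnInterval f a b) :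
    AbsolutelyContinuousOnInterval (fun x => Φ (f x)) a b := by
  obtain ⟨K, hK⟩ := (hΦ.locallyLipschitzOn (s := f '' [[a, b]])).exists_lipschitzOnWith_of_compact
    (isCompact_uIcc.image_of_continuousOn hf.continuousOn)
  refine squeeze_zero' (.of_forall fun E => Finset.sum_nonneg fun i _ => dist_nonneg) ?_
    (by simpa only [mul_zero] using Tendsto.const_mul (K : ℝ) hf)
  rw [eventually_inf_principal]
  filter_upwards with E hE
  rw [Finset.mul_sum]
  exact Finset.sum_le_sum fun i hi => hK.dist_le_mul _ (mem_image_of_mem f (hE.1 i hi).1) _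
    (mem_image_of_mem f (hE.1 i hi).2)

theorem comp_add_integral_eq_add_integral {Φ f : ℝ → ℝ} {a b c : ℝ} (hΦ : ContDiff ℝ 1 Φ)
    (hf : IntervalIntegrable f volume a b) :
    Φ (c + ∫ s in a..b, f s) =
      Φ c + ∫ t in a..b, deriv Φ (c + ∫ s in a..t, f s) * f t := by
  have hprim := hf.absolutelyContinuousOnInterval_intervalIntegral left_mem_uIcc
  have hac : AbsolutelyContinuousOnInterval (fun t => Φ (c + ∫ s in a..t, f s)) a b :=
    absolutelyContinuousOnInterval_comp (Φ := fun x => Φ (c + x))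
      (hΦ.comp (contDiff_const.add contDiff_id)).locallyLipschitz hprim
  have hderiv : ∀ᵐ t, t ∈ Ι a b → deriv (fun t => Φ (c + ∫ s in a..t, f s)) t =
      deriv Φ (c + ∫ s in a..t, f s) * f t := by
    filter_upwards [hf.ae_hasDerivAt_integral] with t ht hmem
    have hinner := ht (uIoc_subset_uIcc hmem) a left_mem_uIcc
    exact ((hΦ.differentiable_one _).hasDerivAt.comp t (hinner.const_add c)).deriv
  rw [← intervalIntegral.integral_congr_ae hderiv, hac.integral_deriv_eq_sub]
  simp

/-- Duhamel's formula: when `h a = 0`, this is the value at `t` of the solution `v` of the linear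
equation `v t = h t + ∫ s in a..t, q s * v s`, for absolutely continuous `h`. -/
noncomputable def duhamel (q h : ℝ → ℝ) (a t : ℝ) : ℝ :=
  ∫ s in a..t, Real.exp (∫ u in s..t, q u) * deriv h s

section Duhamel

variable {q h v : ℝ → ℝ} {a b : ℝ}

theorem duhamel_const_mul (ε : ℝ) : duhamel q (fun s => ε * h s) a b = ε * duhamel q h a b := by
  simp only [duhamel, deriv_const_mul_field, mul_left_comm _ ε, intervalIntegral.integral_const_mul]

theorem eq_duhamel_of_eq_add_integral (hq : IntervalIntegrable q volume a b)
    (hh : AbsolutelyContinuousOnInterval h a b) (hha : h a = 0) (hv : ContinuousOn v [[a, b]])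
    (hvh : ∀ t ∈ [[a, b]], v t = h t + ∫ s in a..t, q s * v s) :
    v b = duhamel q h a b := by
  have hqv : IntervalIntegrable (fun s => q s * v s) volume a b := hq.mul_continuousOn hv
  set E : ℝ → ℝ := fun s => Real.exp (-∫ u in b..s, q u) with hE
  set w : ℝ → ℝ := fun s => h s + ∫ u in a..s, q u * v u with hw
  have hEac : AbsolutelyContinuousOnInterval E a b :=
    absolutelyContinuousOnInterval_comp Real.contDiff_exp.locallyLipschitz
      (hq.absolutelyContinuousOnInterval_intervalIntegral right_mem_uIcc).fun_neg
  have hwac : AbsolutelyContinuousOnInterval w a b :=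
    hh.fun_add (hqv.absolutelyContinuousOnInterval_intervalIntegral left_mem_uIcc)
  have hderiv : ∀ᵐ s, s ∈ Ι a b → deriv (fun s => E s * w s) s = E s * deriv h s := by
    filter_upwards [hq.ae_hasDerivAt_integral, hqv.ae_hasDerivAt_integral, hh.ae_differentiableAt]
      with s hQ hI hhs hs
    have hs' := uIoc_subset_uIcc hs
    have hEs : HasDerivAt E (E s * -q s) s := (hQ hs' b right_mem_uIcc).fun_neg.exp
    have hws : HasDerivAt w (deriv h s + q s * v s) s :=
      (hhs hs').hasDerivAt.add (hI hs' a left_mem_uIcc)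
    rw [(hEs.fun_mul hws).deriv, show w s = v s from (hvh s hs').symm]
    ring
  calc v b = ∫ s in a..b, deriv (fun s => E s * w s) s := by
        rw [(hEac.fun_mul hwac).integral_deriv_eq_sub]
        simp [hE, hw, hha, hvh b right_mem_uIcc]
    _ = ∫ s in a..b, E s * deriv h s := intervalIntegral.integral_congr_ae hderiv
    _ = duhamel q h a b := by
        simp only [duhamel, hE, ← intervalIntegral.integral_symm]

theorem abs_exp_integral_mul_le {L s : ℝ} (hL : ∀ u ∈ [[a, b]], |q u| ≤ L) (hs : s ∈ [[a, b]])
    (y : ℝ) : |Real.exp (∫ u in s..b, q u) * y| ≤ Real.exp (L * |b - a|) * |y| := by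
  have hL0 : 0 ≤ L := (abs_nonneg _).trans (hL a left_mem_uIcc)
  have hQ : |∫ u in s..b, q u| ≤ L * |b - s| :=
    intervalIntegral.norm_integral_le_of_norm_le_const (f := q) fun u hu =>
      hL u (uIcc_subset_uIcc_right hs (uIoc_subset_uIcc hu))
  rw [abs_mul, Real.abs_exp]
  gcongr
  exact (le_abs_self _).trans
    (hQ.trans (mul_le_mul_of_nonneg_left (abs_sub_right_of_mem_uIcc hs) hL0))

theorem abs_duhamel_le {L : ℝ} (hh : IntervalIntegrable (deriv h) volume a b)
    (hL : ∀ u ∈ [[a, b]], |q u| ≤ L) :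
    |duhamel q h a b| ≤ Real.exp (L * |b - a|) * |∫ s in a..b, ‖deriv h s‖| := by
  have hbound : ∀ᵐ s ∂volume.restrict (Ι a b), ‖Real.exp (∫ u in s..b, q u) * deriv h s‖ ≤
      Real.exp (L * |b - a|) * ‖deriv h s‖ := by
    filter_upwards [ae_restrict_mem measurableSet_uIoc] with s hs
    exact abs_exp_integral_mul_le hL (uIoc_subset_uIcc hs) _
  have := intervalIntegral.norm_integral_le_abs_of_norm_le hbound (hh.norm.const_mul _)
  rwa [intervalIntegral.integral_const_mul, abs_mul, Real.abs_exp] at this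

theorem continuousAt_duhamel {X : Type*} [TopologicalSpace X] [FirstCountableTopology X]
    {q : X → ℝ → ℝ} {x₀ : X} {L : ℝ} (hh : IntervalIntegrable (deriv h) volume a b)
    (hq : ∀ x, IntervalIntegrable (q x) volume a b)
    (hL : ∀ᶠ x in 𝓝 x₀, ∀ u ∈ [[a, b]], |q x u| ≤ L)
    (hx₀ : ∀ u ∈ [[a, b]], ContinuousAt (fun x => q x u) x₀) :
    ContinuousAt (fun x => duhamel (q x) h a b) x₀ := by
  have hQ : ∀ s ∈ [[a, b]], ContinuousAt (fun x => ∫ u in s..b, q x u) x₀ := by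
    intro s hs
    have hsub : ∀ {u}, u ∈ Ι s b → u ∈ [[a, b]] := fun hu =>
      uIcc_subset_uIcc_right hs (uIoc_subset_uIcc hu)
    refine intervalIntegral.continuousAt_of_dominated_interval (bound := fun _ => L)
      (.of_forall fun x =>
        ((hq x).mono_set (uIcc_subset_uIcc_right hs)).def'.aestronglyMeasurable) ?_
      intervalIntegrable_const (.of_forall fun u hu => hx₀ u (hsub hu))
    filter_upwards [hL] with x hx using .of_forall fun u hu => hx u (hsub hu)
  refine intervalIntegral.continuousAt_of_dominated_interval
    (bound := fun s => Real.exp (L * |b - a|) * ‖deriv h s‖) (.of_forall fun x => ?_) ?_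
    (hh.norm.const_mul _)
    (.of_forall fun s hs => (hQ s (uIoc_subset_uIcc hs)).rexp.mul continuousAt_const)
  · have hE : ContinuousOn (fun s => Real.exp (∫ u in s..b, q x u)) [[a, b]] :=
      (intervalIntegral.continuousOn_primitive_interval_left
        ((intervalIntegrable_iff').1 (hq x))).rexp
    exact (hE.mono uIoc_subset_uIcc).aestronglyMeasurable measurableSet_uIoc |>.mul
      hh.def'.aestronglyMeasurable
  · filter_upwards [hL] with x hx using
      .of_forall fun s hs => abs_exp_integral_mul_le hx (uIoc_subset_uIcc hs) _

end Duhamel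

/-- The mean value of the derivative of `F` over the segment from `x` to `y`. Unlike the difference
quotient of `F`, it is jointly continuous in `(x, y)` up to the diagonal. -/
noncomputable def meanDeriv (F : ℝ → ℝ) (x y : ℝ) : ℝ :=
  ∫ θ in (0 : ℝ)..1, deriv F (x + θ • (y - x))

section MeanDeriv

variable {F : ℝ → ℝ}

theorem meanDeriv_self (x : ℝ) : meanDeriv F x x = deriv F x := by
  simp [meanDeriv]

theorem meanDeriv_mul_sub (hF : ContDiff ℝ 1 F) (x y : ℝ) :
    meanDeriv F x y * (y - x) = F y - F x := by
  have hcont : ContinuousOn (fun θ : ℝ => deriv F (x + θ • (y - x))) (Icc 0 1) := by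
    have := hF.continuous_deriv_one
    fun_prop
  have := intervalIntegral.integral_unitInterval_deriv_eq_sub hcont
    fun θ _ => (hF.differentiable_one _).hasDerivAt
  rwa [smul_eq_mul, add_sub_cancel, mul_comm] at this

theorem continuous_meanDeriv (hF : ContDiff ℝ 1 F) :
    Continuous fun p : ℝ × ℝ => meanDeriv F p.1 p.2 := by
  have := hF.continuous_deriv_one
  unfold meanDeriv
  apply intervalIntegral.continuous_parametric_intervalIntegral_of_continuous'
  fun_prop

theorem abs_meanDeriv_le {s : Set ℝ} {L x y : ℝ} (hs : Convex ℝ s)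
    (hL : ∀ z ∈ s, |deriv F z| ≤ L) (hx : x ∈ s) (hy : y ∈ s) : |meanDeriv F x y| ≤ L := by
  have hmem : ∀ θ ∈ Ι (0 : ℝ) 1, x + θ • (y - x) ∈ s := fun θ hθ => by
    rw [uIoc_of_le zero_le_one] at hθ
    exact hs.add_smul_sub_mem hx hy ⟨hθ.1.le, hθ.2⟩
  simpa [meanDeriv] using intervalIntegral.norm_integral_le_of_norm_le_const
    (f := fun θ : ℝ => deriv F (x + θ • (y - x))) fun θ hθ => hL _ (hmem θ hθ)

theorem exists_eventually_abs_meanDeriv_le {ι α : Type*} {l : Filter ι} {S : Set α}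
    {y : ι → α → ℝ} {z : α → ℝ} (hF : ContDiff ℝ 1 F) (hyz : TendstoUniformlyOn y z l S)
    (hz : ∃ R, ∀ s ∈ S, |z s| ≤ R) :
    ∃ L, ∀ᶠ i in l, ∀ s ∈ S, |meanDeriv F (z s) (y i s)| ≤ L := by
  obtain ⟨R, hR⟩ := hz
  obtain ⟨L, hL⟩ := (isCompact_closedBall (0 : ℝ) (R + 1)).exists_bound_of_continuousOn
    hF.continuous_deriv_one.continuousOn
  refine ⟨L, (Metric.tendstoUniformlyOn_iff.1 hyz 1 one_pos).mono fun i hi s hs => ?_⟩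
  refine abs_meanDeriv_le (convex_closedBall _ _) hL ?_ ?_
  · exact mem_closedBall_zero_iff.2 ((hR s hs).trans (by linarith))
  · exact mem_closedBall_zero_iff.2 <|
      (norm_le_norm_add_norm_sub _ _).trans (add_le_add (hR s hs) (hi s hs).le)

end MeanDeriv

theorem forall_mem_Icc_lt_of_le_imp_lt {f : ℝ → ℝ} {a b C : ℝ} (hf : ContinuousOn f (Icc a b))
    (hstart : f a ≤ C)
    (himp : ∀ t ∈ Icc a b, (∀ s ∈ Icc a t, f s ≤ C) → f t < C) {t : ℝ} (ht : t ∈ Icc a b) :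
    f t < C := by
  by_contra! hCt
  have hclosed : IsCompact (Icc a b ∩ f ⁻¹' Ici C) :=
    isCompact_Icc.of_isClosed_subset (hf.preimage_isClosed_of_isClosed isClosed_Icc isClosed_Ici)
      inter_subset_left
  obtain ⟨τ, ⟨hτ, hCτ⟩, hmin⟩ := hclosed.exists_isLeast ⟨t, ht, hCt⟩
  have hbefore : ∀ s ∈ Ico a τ, f s ≤ C := fun s hs => by
    by_contra! hlt
    exact hs.2.not_ge (hmin ⟨⟨hs.1, hs.2.le.trans hτ.2⟩, hlt.le⟩)
  refine (himp τ hτ fun s hs => ?_).not_ge hCτ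
  rcases hτ.1.eq_or_lt with rfl | haτ
  · rwa [le_antisymm hs.2 hs.1]
  · have hfs : ContinuousOn f (closure (Ico a τ)) := by
      rw [closure_Ico haτ.ne]
      exact hf.mono (Icc_subset_Icc_right hτ.2)
    refine le_on_closure hbefore hfs continuousOn_const ?_
    rwa [closure_Ico haτ.ne]

section Perturbation

variable {F p r y z : ℝ → ℝ} {a b : ℝ}

theorem sub_eq_duhamel (hF : ContDiff ℝ 1 F)
    (hpr : AbsolutelyContinuousOnInterval (fun t => p t - r t) a b) (hpra : p a - r a = 0)
    (hyc : ContinuousOn y [[a, b]]) (hzc : ContinuousOn z [[a, b]])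
    (hy : ∀ t ∈ [[a, b]], y t = p t + ∫ s in a..t, F (y s))
    (hz : ∀ t ∈ [[a, b]], z t = r t + ∫ s in a..t, F (z s)) :
    y b - z b = duhamel (fun s => meanDeriv F (z s) (y s)) (fun t => p t - r t) a b := by
  have hqc : ContinuousOn (fun s => meanDeriv F (z s) (y s)) [[a, b]] :=
    (continuous_meanDeriv hF).comp_continuousOn (hzc.prodMk hyc)
  refine eq_duhamel_of_eq_add_integral (v := fun t => y t - z t) hqc.intervalIntegrable hpr hpra
    (hyc.sub hzc) fun t ht => ?_
  have hint : ∀ {x : ℝ → ℝ}, ContinuousOn x [[a, b]] →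
      IntervalIntegrable (fun s => F (x s)) volume a t := fun hx =>
    ((hF.continuous.comp_continuousOn hx).mono (uIcc_subset_uIcc_left ht)).intervalIntegrable
  simp only [meanDeriv_mul_sub hF]
  rw [intervalIntegral.integral_sub (hint hyc) (hint hzc), hy t ht, hz t ht]
  ring

theorem abs_sub_le_of_mem_convex {S : Set ℝ} {L : ℝ} (hF : ContDiff ℝ 1 F) (hS : Convex ℝ S)
    (hL : ∀ x ∈ S, |deriv F x| ≤ L)
    (hpr : AbsolutelyContinuousOnInterval (fun t => p t - r t) a b) (hpra : p a - r a = 0)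
    (hyc : ContinuousOn y [[a, b]]) (hzc : ContinuousOn z [[a, b]])
    (hy : ∀ t ∈ [[a, b]], y t = p t + ∫ s in a..t, F (y s))
    (hz : ∀ t ∈ [[a, b]], z t = r t + ∫ s in a..t, F (z s))
    (hyS : ∀ t ∈ [[a, b]], y t ∈ S) (hzS : ∀ t ∈ [[a, b]], z t ∈ S) :
    |y b - z b| ≤ Real.exp (L * |b - a|) * |∫ s in a..b, ‖deriv (fun t => p t - r t) s‖| := by
  rw [sub_eq_duhamel hF hpr hpra hyc hzc hy hz]
  exact abs_duhamel_le hpr.intervalIntegrable_deriv fun u hu =>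
    abs_meanDeriv_le hS hL (hzS u hu) (hyS u hu)

theorem abs_sub_le_of_abs_sub_le_one {R L t : ℝ} (hF : ContDiff ℝ 1 F)
    (hL : ∀ x ∈ closedBall 0 (R + 1), |deriv F x| ≤ L)
    (hpr : AbsolutelyContinuousOnInterval (fun t => p t - r t) a b) (hpra : p a - r a = 0)
    (hyc : ContinuousOn y (Icc a b)) (hzc : ContinuousOn z (Icc a b))
    (hy : ∀ t ∈ Icc a b, y t = p t + ∫ s in a..t, F (y s))
    (hz : ∀ t ∈ Icc a b, z t = r t + ∫ s in a..t, F (z s)) (hzR : ∀ t ∈ Icc a b, |z t| ≤ R)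
    (ht : t ∈ Icc a b) (hclose : ∀ s ∈ Icc a t, |y s - z s| ≤ 1) :
    |y t - z t| ≤ Real.exp (L * (b - a)) * ∫ s in a..b, ‖deriv (fun t => p t - r t) s‖ := by
  have hsub : [[a, t]] ⊆ Icc a b := by
    rw [uIcc_of_le ht.1]
    exact Icc_subset_Icc_right ht.2
  have hprt : AbsolutelyContinuousOnInterval (fun t => p t - r t) a t :=
    hpr.mono (uIcc_of_le (ht.1.trans ht.2) ▸ hsub)
  have hzS : ∀ s ∈ [[a, t]], z s ∈ closedBall 0 (R + 1) := fun s hs =>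
    mem_closedBall_zero_iff.2 ((hzR s (hsub hs)).trans (by linarith))
  have hyS : ∀ s ∈ [[a, t]], y s ∈ closedBall 0 (R + 1) := fun s hs =>
    mem_closedBall_zero_iff.2 <| (norm_le_norm_add_norm_sub' _ _).trans
      (add_le_add (hzR s (hsub hs)) (hclose s (uIcc_of_le ht.1 ▸ hs)))
  have hL0 : 0 ≤ L := (abs_nonneg _).trans (hL _ (hzS a left_mem_uIcc))
  have hmono : ∫ s in a..t, ‖deriv (fun t => p t - r t) s‖ ≤
      ∫ s in a..b, ‖deriv (fun t => p t - r t) s‖ :=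
    intervalIntegral.integral_mono_interval le_rfl ht.1 ht.2
      (.of_forall fun _ => norm_nonneg _) hpr.intervalIntegrable_deriv.norm
  have hnonneg : 0 ≤ ∫ s in a..t, ‖deriv (fun t => p t - r t) s‖ :=
    intervalIntegral.integral_nonneg ht.1 fun _ _ => norm_nonneg _
  refine (abs_sub_le_of_mem_convex hF (convex_closedBall _ _) hL hprt hpra (hyc.mono hsub)
    (hzc.mono hsub) (fun s hs => hy s (hsub hs)) (fun s hs => hz s (hsub hs)) hyS hzS).trans ?_
  rw [abs_of_nonneg (sub_nonneg.2 ht.1), abs_of_nonneg hnonneg]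
  gcongr
  exact ht.2

theorem abs_sub_le_of_exp_mul_lt_one {R L : ℝ} (hF : ContDiff ℝ 1 F)
    (hL : ∀ x ∈ closedBall 0 (R + 1), |deriv F x| ≤ L)
    (hpr : AbsolutelyContinuousOnInterval (fun t => p t - r t) a b) (hpra : p a - r a = 0)
    (hyc : ContinuousOn y (Icc a b)) (hzc : ContinuousOn z (Icc a b))
    (hy : ∀ t ∈ Icc a b, y t = p t + ∫ s in a..t, F (y s))
    (hz : ∀ t ∈ Icc a b, z t = r t + ∫ s in a..t, F (z s)) (hzR : ∀ t ∈ Icc a b, |z t| ≤ R)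
    (hsmall : Real.exp (L * (b - a)) * ∫ s in a..b, ‖deriv (fun t => p t - r t) s‖ < 1)
    {t : ℝ} (ht : t ∈ Icc a b) :
    |y t - z t| ≤ Real.exp (L * (b - a)) * ∫ s in a..b, ‖deriv (fun t => p t - r t) s‖ := by
  have haI : a ∈ Icc a b := left_mem_Icc.2 (ht.1.trans ht.2)
  have hstart : |y a - z a| ≤ 1 := by
    rw [hy a haI, hz a haI, intervalIntegral.integral_same, intervalIntegral.integral_same,
      add_zero, add_zero, hpra, abs_zero]
    exact zero_le_one
  have himp : ∀ τ ∈ Icc a b, (∀ s ∈ Icc a τ, |y s - z s| ≤ 1) → |y τ - z τ| < 1 :=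
    fun τ hτ hclose => (abs_sub_le_of_abs_sub_le_one hF hL hpr hpra hyc hzc hy hz hzR hτ
      hclose).trans_lt hsmall
  exact abs_sub_le_of_abs_sub_le_one hF hL hpr hpra hyc hzc hy hz hzR ht fun s hs =>
    (forall_mem_Icc_lt_of_le_imp_lt (hyc.sub hzc).abs hstart himp
      ⟨hs.1, hs.2.trans ht.2⟩).le

end Perturbation

section Additive

variable {F p h : ℝ → ℝ} {Y : ℝ → ℝ → ℝ} {a b : ℝ}

theorem tendstoUniformlyOn_of_additive_perturbation (hF : ContDiff ℝ 1 F)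
    (hh : AbsolutelyContinuousOnInterval h a b) (hha : h a = 0)
    (hYc : ∀ ε, ContinuousOn (Y ε) (Icc a b))
    (hY : ∀ ε, ∀ t ∈ Icc a b, Y ε t = p t + ε * h t + ∫ s in a..t, F (Y ε s)) :
    TendstoUniformlyOn Y (Y 0) (𝓝 0) (Icc a b) := by
  obtain ⟨R, hR⟩ := isCompact_Icc.exists_bound_of_continuousOn (hYc 0)
  obtain ⟨L, hL⟩ := (isCompact_closedBall (0 : ℝ) (R + 1)).exists_bound_of_continuousOn
    hF.continuous_deriv_one.continuousOn
  have hscale : ∀ ε, Real.exp (L * (b - a)) *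
      ∫ s in a..b, ‖deriv (fun t => p t + ε * h t - (p t + 0 * h t)) s‖ =
      |ε| * (Real.exp (L * (b - a)) * ∫ s in a..b, ‖deriv h s‖) := fun ε => by
    simp only [zero_mul, add_zero, add_sub_cancel_left, deriv_const_mul_field, norm_mul,
      intervalIntegral.integral_const_mul, Real.norm_eq_abs]
    ring
  set M := Real.exp (L * (b - a)) * ∫ s in a..b, ‖deriv h s‖
  have hsmall : ∀ δ > 0, ∀ᶠ ε : ℝ in 𝓝 0, |ε| * M < δ := fun δ hδ => by
    have hcont : Continuous fun ε : ℝ => |ε| * M := by fun_prop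
    exact hcont.continuousAt.eventually_lt continuousAt_const (by simpa using hδ)
  rw [Metric.tendstoUniformlyOn_iff]
  intro δ hδ
  filter_upwards [hsmall 1 one_pos, hsmall δ hδ] with ε hε hεδ t ht
  rw [dist_comm, Real.dist_eq]
  refine lt_of_le_of_lt ?_ hεδ
  rw [← hscale] at hε ⊢
  exact abs_sub_le_of_exp_mul_lt_one hF hL (by simpa using hh.const_mul ε) (by simp [hha]) (hYc ε)
    (hYc 0) (hY ε) (hY 0) hR hε ht

theorem hasDerivAt_of_additive_perturbation (hF : ContDiff ℝ 1 F)
    (hh : AbsolutelyContinuousOnInterval h a b) (hha : h a = 0)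
    (hYc : ∀ ε, ContinuousOn (Y ε) (Icc a b))
    (hY : ∀ ε, ∀ t ∈ Icc a b, Y ε t = p t + ε * h t + ∫ s in a..t, F (Y ε s))
    {t : ℝ} (ht : t ∈ Icc a b) :
    HasDerivAt (fun ε => Y ε t) (duhamel (fun s => deriv F (Y 0 s)) h a t) 0 := by
  have hsub : [[a, t]] ⊆ Icc a b := by
    rw [uIcc_of_le ht.1]
    exact Icc_subset_Icc_right ht.2
  have hht : AbsolutelyContinuousOnInterval h a t :=
    hh.mono (uIcc_of_le (ht.1.trans ht.2) ▸ hsub)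
  have hlim : TendstoUniformlyOn Y (Y 0) (𝓝 0) [[a, t]] :=
    (tendstoUniformlyOn_of_additive_perturbation hF hh hha hYc hY).mono hsub
  set q : ℝ → ℝ → ℝ := fun ε s => meanDeriv F (Y 0 s) (Y ε s)
  have hdiff : ∀ ε, Y ε t - Y 0 t = ε * duhamel (q ε) h a t := fun ε => by
    have := sub_eq_duhamel (p := fun t => p t + ε * h t) (r := fun t => p t + 0 * h t) hF
      (by simpa using hht.const_mul ε) (by simp [hha]) ((hYc ε).mono hsub) ((hYc 0).mono hsub)
      (fun s hs => hY ε s (hsub hs)) fun s hs => hY 0 s (hsub hs)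
    simpa [duhamel_const_mul] using this
  have hqc : ∀ ε, ContinuousOn (q ε) [[a, t]] := fun ε =>
    (continuous_meanDeriv hF).comp_continuousOn (((hYc 0).mono hsub).prodMk ((hYc ε).mono hsub))
  have hq₀ : ∀ s ∈ [[a, t]], ContinuousAt (fun ε => q ε s) 0 := fun s hs =>
    ((continuous_meanDeriv hF).tendsto _).comp (tendsto_const_nhds.prodMk_nhds (hlim.tendsto_at hs))
  obtain ⟨L, hL⟩ := exists_eventually_abs_meanDeriv_le hF hlim
    (isCompact_uIcc.exists_bound_of_continuousOn ((hYc 0).mono hsub))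
  have hV : ContinuousAt (fun ε => duhamel (q ε) h a t) 0 :=
    continuousAt_duhamel hht.intervalIntegrable_deriv (fun ε => (hqc ε).intervalIntegrable) hL hq₀
  have hq0 : q 0 = fun s => deriv F (Y 0 s) := funext fun s => meanDeriv_self _
  rw [hasDerivAt_iff_tendsto_slope, ← hq0]
  refine (hV.tendsto.mono_left nhdsWithin_le_nhds).congr' ?_
  filter_upwards [self_mem_nhdsWithin] with ε hε
  rw [slope_def_field, hdiff ε, sub_zero, mul_div_cancel_left₀ _ hε]

end Additive

theorem continuous_of_eq_add_integral_comp {σ f : ℝ → ℝ} {M α : ℝ} (hσ : Continuous σ)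
    (hM : ∀ x, |σ x| ≤ M) (hf : ∀ β, f β = α + ∫ η in (0 : ℝ)..β, σ (f η)) : Continuous f := by
  set S : Set ℝ := {β | IntervalIntegrable (fun η => σ (f η)) volume 0 β}
  have hSconn : S.OrdConnected := ⟨fun x hx y hy z hz =>
    IntervalIntegrable.trans hx
      ((hx.symm.trans hy).mono_set (uIcc_subset_uIcc left_mem_uIcc (Icc_subset_uIcc hz)))⟩
  have hlip : ∀ x ∈ S, ∀ y ∈ S, |f y - f x| ≤ M * |y - x| := fun x hx y hy => by
    rw [hf x, hf y, add_sub_add_left_eq_sub, intervalIntegral.integral_interval_sub_left hy hx]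
    exact intervalIntegral.norm_integral_le_of_norm_le_const (f := fun η => σ (f η))
      fun η _ => hM (f η)
  have hcont : ContinuousOn f S := by
    refine continuousOn_of_dist_le_mul_dist_rpow (C := M) one_pos fun x hx y hy => ?_
    simpa only [Real.rpow_one, Real.dist_eq] using hlip y hy x hx
  -- Off `S` the integral takes the junk value `0`, so that `f` is constant there.
  have hmeas : AEMeasurable f volume := by
    have hSc : AEMeasurable f (volume.restrict Sᶜ) := by
      refine (aemeasurable_const (b := α)).congr ?_
      filter_upwards [ae_restrict_mem hSconn.measurableSet.compl] with x hx
      rw [hf x, intervalIntegral.integral_undef hx, add_zero]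
    simpa using aemeasurable_union_iff.2 ⟨hcont.aemeasurable hSconn.measurableSet, hSc⟩
  have hint : ∀ x y, IntervalIntegrable (fun η => σ (f η)) volume x y := fun x y =>
    (intervalIntegrable_const (c := M)).mono_fun'
      (hσ.measurable.comp_aemeasurable hmeas).aestronglyMeasurable.restrict
      (.of_forall fun η => hM (f η))
  rw [funext hf]
  exact continuous_const.add (intervalIntegral.continuous_primitive hint 0)

/-- `φ α` is a global solution, started at `α`, of the autonomous equation `y' = σ (y)`. -/
structure IsScalarFlow (σ : ℝ → ℝ) (φ : ℝ → ℝ → ℝ) : Prop where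
  map_zero : ∀ α, φ α 0 = α
  hasDerivAt : ∀ α β, HasDerivAt (φ α) (σ (φ α β)) β

theorem isScalarFlow_of_eq_add_integral {σ : ℝ → ℝ} {φ : ℝ → ℝ → ℝ} {M : ℝ} (hσ : Continuous σ)
    (hM : ∀ x, |σ x| ≤ M) (hφ : ∀ α β, φ α β = α + ∫ η in (0 : ℝ)..β, σ (φ α η)) :
    IsScalarFlow σ φ where
  map_zero α := by simpa using hφ α 0
  hasDerivAt α β := by
    have hcont : Continuous fun η => σ (φ α η) :=
      hσ.comp (continuous_of_eq_add_integral_comp hσ hM (hφ α))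
    exact ((hcont.integral_hasStrictDerivAt 0 β).hasDerivAt.const_add α).congr_of_eventuallyEq
      (.of_forall (hφ α))

/-- The Lamperti transform of a positive coefficient `σ`, the coordinate in which `y' = σ (y)`
becomes `y' = 1`. -/
noncomputable def lamperti (σ : ℝ → ℝ) (x : ℝ) : ℝ := ∫ u in (0 : ℝ)..x, (σ u)⁻¹

section Lamperti

variable {σ : ℝ → ℝ}

theorem hasDerivAt_lamperti (hσ : Continuous σ) (hpos : ∀ x, 0 < σ x) (x : ℝ) :
    HasDerivAt (lamperti σ) (σ x)⁻¹ x :=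
  ((hσ.inv₀ fun x => (hpos x).ne').integral_hasStrictDerivAt 0 x).hasDerivAt

theorem contDiff_lamperti (hσ : Continuous σ) (hpos : ∀ x, 0 < σ x) :
    ContDiff ℝ 1 (lamperti σ) := by
  rw [contDiff_one_iff_deriv, funext fun x => (hasDerivAt_lamperti hσ hpos x).deriv]
  exact ⟨fun x => (hasDerivAt_lamperti hσ hpos x).differentiableAt,
    hσ.inv₀ fun x => (hpos x).ne'⟩

theorem strictMono_lamperti (hσ : Continuous σ) (hpos : ∀ x, 0 < σ x) :
    StrictMono (lamperti σ) :=
  strictMono_of_deriv_pos fun x => by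
    rw [(hasDerivAt_lamperti hσ hpos x).deriv]
    exact inv_pos.2 (hpos x)

end Lamperti

namespace IsScalarFlow

variable {b σ : ℝ → ℝ} {φ : ℝ → ℝ → ℝ}

theorem contDiff (hφ : IsScalarFlow σ φ) (hσ : Continuous σ) (α : ℝ) : ContDiff ℝ 1 (φ α) := by
  have hdiff : Differentiable ℝ (φ α) := fun β => (hφ.hasDerivAt α β).differentiableAt
  rw [contDiff_one_iff_deriv, funext fun β => (hφ.hasDerivAt α β).deriv]
  exact ⟨hdiff, hσ.comp hdiff.continuous⟩

theorem lamperti_apply (hφ : IsScalarFlow σ φ) (hσ : Continuous σ) (hpos : ∀ x, 0 < σ x)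
    (α β : ℝ) : lamperti σ (φ α β) = lamperti σ α + β := by
  have hderiv : ∀ η ∈ [[0, β]], HasDerivAt (fun η => lamperti σ (φ α η)) 1 η := fun η _ => by
    have := (hasDerivAt_lamperti hσ hpos (φ α η)).comp η (hφ.hasDerivAt α η)
    rwa [inv_mul_cancel₀ (hpos _).ne'] at this
  have := intervalIntegral.integral_eq_sub_of_hasDerivAt hderiv intervalIntegrable_const
  simp only [intervalIntegral.integral_const, sub_zero, smul_eq_mul, mul_one, hφ.map_zero] at this
  linarith

theorem apply_zero_lamperti (hφ : IsScalarFlow σ φ) (hσ : Continuous σ) (hpos : ∀ x, 0 < σ x)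
    (x : ℝ) : φ 0 (lamperti σ x) = x := by
  apply (strictMono_lamperti hσ hpos).injective
  rw [hφ.lamperti_apply hσ hpos, lamperti, intervalIntegral.integral_same, zero_add]

theorem continuous_uncurry (hφ : IsScalarFlow σ φ) (hσ : Continuous σ) (hpos : ∀ x, 0 < σ x) :
    Continuous fun p : ℝ × ℝ => φ p.1 p.2 := by
  have hφ₀ := (hφ.contDiff hσ 0).continuous
  have hlam := (contDiff_lamperti hσ hpos).continuous
  have hcont : Continuous fun p : ℝ × ℝ => φ 0 (lamperti σ p.1 + p.2) := by fun_prop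
  refine hcont.congr fun p => ?_
  rw [← hφ.lamperti_apply hσ hpos, hφ.apply_zero_lamperti hσ hpos]

theorem fsb_eq (hφ : IsScalarFlow σ φ) (hσ : ContDiff ℝ 1 σ) (hpos : ∀ x, 0 < σ x) (x y : ℝ) :
    fsb b σ φ x y = σ x * (b (φ x y) / σ (φ x y)) := by
  have hderiv : ∀ η ∈ [[0, y]],
      HasDerivAt (fun η => Real.log (σ (φ x η))) (deriv σ (φ x η)) η := fun η _ => by
    have := ((hσ.differentiable_one (φ x η)).hasDerivAt.comp η (hφ.hasDerivAt x η)).log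
      (hpos (φ x η)).ne'
    rwa [Function.comp_apply, mul_div_cancel_right₀ _ (hpos _).ne'] at this
  have hint := intervalIntegral.integral_eq_sub_of_hasDerivAt hderiv
    ((hσ.continuous_deriv_one.comp
      (hφ.contDiff hσ.continuous x).continuous).intervalIntegrable _ _)
  rw [fsb, hint, hφ.map_zero, neg_sub, Real.exp_sub, Real.exp_log (hpos _), Real.exp_log (hpos _)]
  ring

theorem contDiff_div_comp (hφ : IsScalarFlow σ φ) (hb : ContDiff ℝ 1 b) (hσ : ContDiff ℝ 1 σ)
    (hpos : ∀ x, 0 < σ x) (α : ℝ) : ContDiff ℝ 1 fun y => b (φ α y) / σ (φ α y) :=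
  (hb.comp (hφ.contDiff hσ.continuous α)).div (hσ.comp (hφ.contDiff hσ.continuous α))
    fun _ => (hpos _).ne'

theorem deriv_div_comp (hφ : IsScalarFlow σ φ) (hb : Differentiable ℝ b) (hσ : Differentiable ℝ σ)
    (hpos : ∀ x, 0 < σ x) (α y : ℝ) :
    deriv (fun y => b (φ α y) / σ (φ α y)) y = Wf b σ (φ α y) / σ (φ α y) := by
  have hne := (hpos (φ α y)).ne'
  have hquot := ((hb (φ α y)).hasDerivAt.comp y (hφ.hasDerivAt α y)).fun_div
    ((hσ (φ α y)).hasDerivAt.comp y (hφ.hasDerivAt α y)) hne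
  refine hquot.deriv.trans ?_
  simp only [Wf, Function.comp_apply]
  field_simp

theorem lamperti_dossSussmann (hφ : IsScalarFlow σ φ) (hb : Continuous b) (hσ : ContDiff ℝ 1 σ)
    (hpos : ∀ x, 0 < σ x) {a g : ℝ → ℝ} {ξ t : ℝ} (hac : ContinuousOn a [[0, t]])
    (hg : ContinuousOn g [[0, t]])
    (ha : ∀ r ∈ [[0, t]], a r = ξ + ∫ u in (0 : ℝ)..r, fsb b σ φ (a u) (g u)) :
    lamperti σ (φ (a t) (g t)) =
      lamperti σ ξ + g t + ∫ u in (0 : ℝ)..t, b (φ (a u) (g u)) / σ (φ (a u) (g u)) := by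
  have hx : ContinuousOn (fun u => φ (a u) (g u)) [[0, t]] :=
    (hφ.continuous_uncurry hσ.continuous hpos).comp_continuousOn (hac.prodMk hg)
  have hint : IntervalIntegrable (fun u => fsb b σ φ (a u) (g u)) volume 0 t := by
    simp only [hφ.fsb_eq hσ hpos]
    exact ((hσ.continuous.comp_continuousOn hac).mul ((hb.comp_continuousOn hx).div
      (hσ.continuous.comp_continuousOn hx) fun _ _ => (hpos _).ne')).intervalIntegrable
  have hderiv : ∀ u ∈ [[0, t]],
      deriv (lamperti σ) (ξ + ∫ s in (0 : ℝ)..u, fsb b σ φ (a s) (g s)) * fsb b σ φ (a u) (g u) =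
      b (φ (a u) (g u)) / σ (φ (a u) (g u)) := fun u hu => by
    rw [← ha u hu, (hasDerivAt_lamperti hσ.continuous hpos _).deriv, hφ.fsb_eq hσ hpos,
      inv_mul_cancel_left₀ (hpos _).ne']
  rw [hφ.lamperti_apply hσ.continuous hpos, ha t right_mem_uIcc,
    comp_add_integral_eq_add_integral (contDiff_lamperti hσ.continuous hpos) hint,
    intervalIntegral.integral_congr hderiv]
  ring

end IsScalarFlow

theorem stmt12_general {T ξ : ℝ} {b σ : ℝ → ℝ} (hb : ContDiff ℝ 1 b) (hσ : ContDiff ℝ 1 σ)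
    (hσM : ∃ M, ∀ x, |σ x| ≤ M) (hpos : ∀ x, 0 < σ x) {φ : ℝ → ℝ → ℝ}
    (hφ : ∀ α β : ℝ, φ α β = α + ∫ η in (0 : ℝ)..β, σ (φ α η)) {g h : ℝ → ℝ}
    (hg : ContinuousOn g (Icc 0 T)) (hh : AbsolutelyContinuousOnInterval h 0 T) (hh0 : h 0 = 0)
    {a : ℝ → ℝ → ℝ} (hac : ∀ ε, ContinuousOn (a ε) (Icc 0 T))
    (ha : ∀ ε, ∀ t ∈ Icc 0 T,
      a ε t = ξ + ∫ u in (0 : ℝ)..t, fsb b σ φ (a ε u) (g u + ε * h u)) :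
    ∀ t ∈ Icc 0 T,
      HasDerivAt (fun ε => φ (a ε t) (g t + ε * h t))
        (σ (φ (a 0 t) (g t)) * ∫ s in (0 : ℝ)..t,
          Real.exp (∫ u in s..t, Wf b σ (φ (a 0 u) (g u)) / σ (φ (a 0 u) (g u))) *
            deriv h s) 0 := by
  intro t ht
  obtain ⟨M, hM⟩ := hσM
  have hflow : IsScalarFlow σ φ := isScalarFlow_of_eq_add_integral hσ.continuous hM hφ
  have hT : [[0, T]] = Icc 0 T := uIcc_of_le (ht.1.trans ht.2)
  have hgε : ∀ ε : ℝ, ContinuousOn (fun u => g u + ε * h u) (Icc 0 T) := fun ε =>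
    hg.add (continuousOn_const.mul (hT ▸ hh.continuousOn))
  set Y : ℝ → ℝ → ℝ := fun ε r => lamperti σ (φ (a ε r) (g r + ε * h r))
  have hφY : ∀ ε r, φ 0 (Y ε r) = φ (a ε r) (g r + ε * h r) := fun ε r =>
    hflow.apply_zero_lamperti hσ.continuous hpos _
  have hYc : ∀ ε, ContinuousOn (Y ε) (Icc 0 T) := fun ε =>
    (contDiff_lamperti hσ.continuous hpos).continuous.comp_continuousOn <|
      (hflow.continuous_uncurry hσ.continuous hpos).comp_continuousOn ((hac ε).prodMk (hgε ε))
  have hYeq : ∀ ε, ∀ r ∈ Icc 0 T, Y ε r = lamperti σ ξ + g r + ε * h r +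
      ∫ u in (0 : ℝ)..r, b (φ 0 (Y ε u)) / σ (φ 0 (Y ε u)) := fun ε r hr => by
    have hsub : [[0, r]] ⊆ Icc 0 T := hT ▸ uIcc_subset_uIcc_left (hT ▸ hr)
    simp only [hφY, add_assoc _ (g r)]
    exact hflow.lamperti_dossSussmann hb.continuous hσ hpos ((hac ε).mono hsub)
      ((hgε ε).mono hsub) fun u hu => ha ε u (hsub hu)
  have hYderiv := hasDerivAt_of_additive_perturbation (hflow.contDiff_div_comp hb hσ hpos 0) hh hh0
    hYc hYeq ht
  simpa [Function.comp_def, hφY, duhamel,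
    hflow.deriv_div_comp hb.differentiable_one hσ.differentiable_one hpos] using
    (hflow.hasDerivAt 0 (Y 0 t)).comp 0 hYderiv

theorem stmt12
    (lam : ℝ) (hlam1 : 1/3 < lam) (hlam2 : lam < 1)
    (ξ : ℝ) (b σ : ℝ → ℝ) (hb : CbN 2 b) (hσ : CbN 2 σ)
    (hσpos : ∃ c : ℝ, 0 < c ∧ ∀ x : ℝ, c ≤ σ x)
    (φ : ℝ → ℝ → ℝ) (hφ : ∀ α β : ℝ, φ α β = α + ∫ η in (0:ℝ)..β, σ (φ α η))
    -- `A g` is the Doss–Sussmann auxiliary path for the driver `g`, so that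
    -- `x_t(ξ,g) = φ(A g t, g t)`
    (A : (ℝ → ℝ) → ℝ → ℝ)
    (hA : ∀ g : ℝ → ℝ, ContinuousOn g (Set.Icc 0 1) → g 0 = 0 →
      ContinuousOn (A g) (Set.Icc 0 1) ∧
      ∀ t ∈ Set.Icc (0:ℝ) 1, A g t = ξ + ∫ u in (0:ℝ)..t, fsb b σ φ (A g u) (g u))
    (g : ℝ → ℝ)
    (hg : ∃ Cg : ℝ, ∀ s ∈ Set.Icc (0:ℝ) 1, ∀ t ∈ Set.Icc (0:ℝ) 1,
      |g t - g s| ≤ Cg * |t - s| ^ lam)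
    (hg0 : g 0 = 0)
    (h : ℝ → ℝ) (K : NNReal) (hh : LipschitzOnWith K h (Set.Icc 0 1)) (hh0 : h 0 = 0) :
    ∀ t ∈ Set.Icc (0:ℝ) 1,
      HasDerivAt (fun ε : ℝ => φ (A (fun u => g u + ε * h u) t) (g t + ε * h t))
        (σ (φ (A g t) (g t))
          * ∫ s in (0:ℝ)..t,
              Real.exp (∫ u in s..t,
                Wf b σ (φ (A g u) (g u)) / σ (φ (A g u) (g u))) * deriv h s) 0 := by
  intro t ht
  obtain ⟨c, hc, hσc⟩ := hσpos
  obtain ⟨C, hC⟩ := hg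
  have hgc : ContinuousOn g (Icc 0 1) :=
    continuousOn_of_dist_le_mul_dist_rpow (by linarith) fun x hx y hy => hC y hy x hx
  have hA' := fun ε : ℝ => hA (fun u => g u + ε * h u)
    (hgc.add (continuousOn_const.mul hh.continuousOn)) (by simp [hg0, hh0])
  simpa using stmt12_general (a := fun ε => A fun u => g u + ε * h u)
    (hb.1.of_le one_le_two) (hσ.1.of_le one_le_two) (by simpa using hσ.2 0 (Nat.zero_le 2))
    (fun x => hc.trans_le (hσc x)) hφ hgc
    (LipschitzOnWith.absolutelyContinuousOnInterval (by rwa [uIcc_of_le zero_le_one])) hh0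
    (fun ε => (hA' ε).1) (fun ε => (hA' ε).2) t ht
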